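/- Suppose additionally that M is a positive integer with M ≤ N′, c > 0, and |K_l(t)| ≤ c(l+1) for all l ≤ M and all t. Then for every ε > 0 and every time t with 0 ≤ t < (1/(4c(1+e)))·( log M − 2 − log log(N′³/(2ε)) ), the average block size satisfies E_{s,t}[l] ≤ exp(2c(1+ε)·t). -/

import Mathlib

lemma aux_sum (K φ w : ℕ → ℝ) (n : ℕ) :
    ∑ l ∈ Finset.range (n + 1), w l * (2 * φ l *
      ((if l = 0 then 0 else K (l - 1) * φ (l - 1)) - K l * φ (l + 1)))
    = ∑ l ∈ Finset.range n, (w (l + 1) - w l) * (2 * K l * φ l * φ (l + 1))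
      - 2 * w n * K n * φ n * φ (n + 1) := by
  induction n with
  | zero => simp; ring
  | succ n ih =>
    rw [Finset.sum_range_succ, ih, Finset.sum_range_succ]
    simp
    ring

lemma aux_bound (K φ w A B : ℕ → ℝ) (N M : ℕ) (c : ℝ) (hc : 0 < c)
    (hK : ∀ l ≤ M, |K l| ≤ c * (l + 1))
    (hd : ∀ l, w l ≤ w (l + 1)) (hd0 : ∀ l, M < l → w (l + 1) = w l)
    (hA0 : ∀ l, 0 ≤ A l) (hB0 : ∀ l, 0 ≤ B l)
    (hA : ∀ l ≤ M, (w (l + 1) - w l) * (l + 1) ≤ A l)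
    (hB : ∀ l ≤ M, (w (l + 1) - w l) * (l + 1) ≤ B (l + 1)) :
    ∑ l ∈ Finset.range N, (w (l + 1) - w l) * (2 * K l * φ l * φ (l + 1))
      ≤ ∑ l ∈ Finset.range (N + 1), c * (A l + B l) * φ l ^ 2 := by
  have h1 : ∀ l, (w (l + 1) - w l) * (2 * K l * φ l * φ (l + 1))
      ≤ c * A l * φ l ^ 2 + c * B (l + 1) * φ (l + 1) ^ 2 := by
    intro l
    by_cases h : l ≤ M
    · have hd' : 0 ≤ w (l + 1) - w l := sub_nonneg.2 (hd l)
      have e1 : 2 * K l * φ l * φ (l + 1) ≤ (c * (l + 1)) * (φ l ^ 2 + φ (l + 1) ^ 2) := by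
        have h2 : 2 * K l * φ l * φ (l + 1) ≤ |K l| * (φ l ^ 2 + φ (l + 1) ^ 2) := by
          rcases abs_cases (K l) with ⟨h, h'⟩ | ⟨h, h'⟩ <;> rw [h]
          · nlinarith [mul_nonneg h' (sq_nonneg (φ l - φ (l + 1)))]
          · nlinarith [mul_nonneg (neg_nonneg.2 h'.le) (sq_nonneg (φ l + φ (l + 1)))]
        exact h2.trans (mul_le_mul_of_nonneg_right (hK l h) (by positivity))
      calc _ ≤ (w (l + 1) - w l) * ((c * (l + 1)) * (φ l ^ 2 + φ (l + 1) ^ 2)) :=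
            mul_le_mul_of_nonneg_left e1 hd'
        _ = c * ((w (l + 1) - w l) * (l + 1)) * φ l ^ 2
            + c * ((w (l + 1) - w l) * (l + 1)) * φ (l + 1) ^ 2 := by ring
        _ ≤ _ := by
          have := hA l h
          have := hB l h
          gcongr
    · rw [hd0 l (by omega)]
      have := hA0 l
      have := hB0 (l + 1)
      simp only [sub_self, zero_mul]
      positivity
  calc _ ≤ ∑ l ∈ Finset.range N, (c * A l * φ l ^ 2 + c * B (l + 1) * φ (l + 1) ^ 2) :=
        Finset.sum_le_sum fun l _ => h1 l
    _ = ∑ l ∈ Finset.range N, c * A l * φ l ^ 2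
        + ∑ l ∈ Finset.range N, c * B (l + 1) * φ (l + 1) ^ 2 := Finset.sum_add_distrib
    _ ≤ ∑ l ∈ Finset.range (N + 1), c * A l * φ l ^ 2
        + ∑ l ∈ Finset.range (N + 1), c * B l * φ l ^ 2 := by
      have a1 := hA0 N
      have b1 := hB0 0
      rw [Finset.sum_range_succ (fun l => c * A l * φ l ^ 2),
        Finset.sum_range_succ' (fun l => c * B l * φ l ^ 2)]
      have : 0 ≤ c * A N * φ N ^ 2 := by positivity
      have : 0 ≤ c * B 0 * φ 0 ^ 2 := by positivity
      linarith
    _ = _ := by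
      rw [← Finset.sum_add_distrib]
      exact Finset.sum_congr rfl fun l _ => by ring

lemma aux_mono (N' : ℕ) (K : ℕ → ℝ → ℝ) (φ : ℕ → ℝ → ℝ)
    (hKtop : ∀ t : ℝ, K N' t = 0)
    (hODE : ∀ l ≤ N', ∀ t : ℝ, HasDerivAt (φ l)
      ((if l = 0 then 0 else K (l - 1) t * φ (l - 1) t) - K l t * φ (l + 1) t) t)
    (hinit0 : φ 0 0 = 1) (hinit : ∀ l, 0 < l → φ l 0 = 0)
    (M : ℕ) (c : ℝ) (hc : 0 < c)
    (hK : ∀ l ≤ M, ∀ t : ℝ, |K l t| ≤ c * (l + 1))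
    (w w' A B : ℕ → ℝ → ℝ) (hw : ∀ l t, HasDerivAt (w l) (w' l t) t)
    (hd : ∀ l t, 0 ≤ t → w l t ≤ w (l + 1) t)
    (hd0 : ∀ l t, 0 ≤ t → M < l → w (l + 1) t = w l t)
    (hA0 : ∀ l t, 0 ≤ t → 0 ≤ A l t) (hB0 : ∀ l t, 0 ≤ t → 0 ≤ B l t)
    (hA : ∀ l t, 0 ≤ t → l ≤ M → (w (l + 1) t - w l t) * (l + 1) ≤ A l t)
    (hB : ∀ l t, 0 ≤ t → l ≤ M → (w (l + 1) t - w l t) * (l + 1) ≤ B (l + 1) t)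
    (hle : ∀ l t, 0 ≤ t → c * (A l t + B l t) + w' l t ≤ 0)
    (t : ℝ) (ht : 0 ≤ t) :
    ∑ l ∈ Finset.range (N' + 1), w l t * φ l t ^ 2 ≤ w 0 0 := by
  have hder : ∀ s, HasDerivAt (fun s => ∑ l ∈ Finset.range (N' + 1), w l s * φ l s ^ 2)
      (∑ l ∈ Finset.range (N' + 1), (w' l s * φ l s ^ 2 + w l s * (2 * φ l s *
        ((if l = 0 then 0 else K (l - 1) s * φ (l - 1) s) - K l s * φ (l + 1) s)))) s := by
    intro s
    apply HasDerivAt.fun_sum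
    intro l hl
    have h2 := (hODE l (by simpa [Nat.lt_succ_iff] using hl) s).pow 2
    have h3 := (hw l s).mul h2
    exact h3.congr_deriv (by simp)
  have hanti : AntitoneOn (fun s => ∑ l ∈ Finset.range (N' + 1), w l s * φ l s ^ 2)
      (Set.Ici 0) := by
    apply antitoneOn_of_deriv_nonpos (convex_Ici 0)
    · exact fun s _ => (hder s).continuousAt.continuousWithinAt
    · exact fun s _ => (hder s).differentiableAt.differentiableWithinAt
    · intro s hs
      have hs : 0 ≤ s := by
        rw [interior_Ici] at hs
        exact le_of_lt hs
      rw [(hder s).deriv, Finset.sum_add_distrib,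
        aux_sum (fun l => K l s) (fun l => φ l s) (fun l => w l s), hKtop]
      have := aux_bound (fun l => K l s) (fun l => φ l s) (fun l => w l s)
        (fun l => A l s) (fun l => B l s) N' M c hc (fun l h => hK l h s)
        (fun l => hd l s hs) (fun l => hd0 l s hs) (fun l => hA0 l s hs) (fun l => hB0 l s hs)
        (fun l => hA l s hs) (fun l => hB l s hs)
      have h5 : ∑ l ∈ Finset.range (N' + 1), w' l s * φ l s ^ 2
          + ∑ l ∈ Finset.range (N' + 1), c * (A l s + B l s) * φ l s ^ 2 ≤ 0 := by
        rw [← Finset.sum_add_distrib]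
        apply Finset.sum_nonpos
        intro l _
        have := hle l s hs
        nlinarith [sq_nonneg (φ l s)]
      simp only [mul_zero, zero_mul, sub_zero] at *
      linarith
  have h := hanti (Set.mem_Ici.2 le_rfl) (Set.mem_Ici.2 ht) ht
  refine h.trans (le_of_eq ?_)
  simp only
  rw [Finset.sum_eq_single 0]
  · simp [hinit0]
  · intro l _ hl
    simp [hinit l (Nat.pos_of_ne_zero hl)]
  · simp

/-- Lyapunov bound: if the quantum-walk rates satisfy `|K_l(t)| ≤ c(l+1)` for `l ≤ M`, then
for every `ε > 0` the average block size obeys `E_{s,t}[l] ≤ exp(2c(1+ε)t)` for all times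
`0 ≤ t < (1/(4c(1+e)))(log M − 2 − log log(N′³/(2ε)))`. -/
theorem lyapunov_bound (N' : ℕ) (hN' : 0 < N') (K : ℕ → ℝ → ℝ) (φ : ℕ → ℝ → ℝ)
    (hKcont : ∀ l, Continuous (K l))
    (hKtop : ∀ t : ℝ, K N' t = 0)
    (hODE : ∀ l ≤ N', ∀ t : ℝ, HasDerivAt (φ l)
      ((if l = 0 then 0 else K (l - 1) t * φ (l - 1) t) - K l t * φ (l + 1) t) t)
    (hinit0 : φ 0 0 = 1) (hinit : ∀ l, 0 < l → φ l 0 = 0)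
    (hnorm : ∀ t : ℝ, ∑ l ∈ Finset.range (N' + 1), (φ l t) ^ 2 = 1)
    (M : ℕ) (hMpos : 0 < M) (hMN : M ≤ N') (c : ℝ) (hc : 0 < c)
    (hK : ∀ l ≤ M, ∀ t : ℝ, |K l t| ≤ c * (l + 1)) :
    ∀ ε > (0 : ℝ), ∀ t : ℝ, 0 ≤ t →
      t < (1 / (4 * c * (1 + Real.exp 1))) *
        (Real.log M - 2 - Real.log (Real.log ((N' : ℝ) ^ 3 / (2 * ε)))) →
      ∑ l ∈ Finset.range (N' + 1), (l : ℝ) * (φ l t) ^ 2 ≤ Real.exp (2 * c * (1 + ε) * t) := by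
  intro ε hε t ht htb
  have hP : ∀ l, 0 ≤ φ l t ^ 2 := fun l => sq_nonneg _
  have hn := hnorm t
  have hN1 : (1 : ℝ) ≤ N' := by exact_mod_cast hN'
  have hexp1 : 1 ≤ Real.exp (2 * c * (1 + ε) * t) := Real.one_le_exp (by positivity)
  by_cases hεN : (N' : ℝ) ≤ ε
  · have h3 := aux_mono N' K φ hKtop hODE hinit0 hinit M c hc hK
      (fun l s => (if l = 0 then 0 else 1) - c * s) (fun _ _ => - c)
      (fun l _ => if l = 0 then 1 else 0) (fun l _ => if l = 0 then 0 else 1)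
      (fun l s => by
        simpa using ((hasDerivAt_id s).const_mul c).const_sub (if l = 0 then (0:ℝ) else 1))
      (fun l s _ => by by_cases h : l = 0 <;> simp [h])
      (fun l s _ hl => by simp [show l ≠ 0 by omega])
      (fun l s _ => by by_cases h : l = 0 <;> simp [h])
      (fun l s _ => by by_cases h : l = 0 <;> simp [h])
      (fun l s _ _ => by by_cases h : l = 0 <;> simp [h])
      (fun l s _ _ => by by_cases h : l = 0 <;> simp [h])
      (fun l s _ => by by_cases h : l = 0 <;> simp [h]) t ht
    simp only [sub_mul, Finset.sum_sub_distrib, ← Finset.mul_sum, hn] at h3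
    have h4 : ∑ l ∈ Finset.range (N' + 1), (l : ℝ) * (φ l t) ^ 2
        ≤ N' * ∑ l ∈ Finset.range (N' + 1), (if l = 0 then (0:ℝ) else 1) * (φ l t) ^ 2 := by
      rw [Finset.mul_sum]
      apply Finset.sum_le_sum
      intro l hl
      have : (l : ℝ) ≤ N' := by
        have := Finset.mem_range.1 hl
        exact_mod_cast (by omega : l ≤ N')
      by_cases h : l = 0
      · simp [h]
      · simp only [h, if_false, one_mul]
        exact mul_le_mul_of_nonneg_right this (hP l)
    have h5 := Real.add_one_le_exp (2 * c * (1 + ε) * t)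
    have hct : 0 ≤ c * t := by positivity
    simp at h3
    have h6 : N' * ∑ l ∈ Finset.range (N' + 1), (if l = 0 then (0:ℝ) else 1) * (φ l t) ^ 2
        ≤ N' * (c * t) := mul_le_mul_of_nonneg_left (by simpa using h3) (by positivity)
    nlinarith [mul_le_mul_of_nonneg_right hεN hct]
  push Not at hεN
  by_cases hN2 : N' = 1
  · refine le_trans ?_ hexp1
    rw [← hn]
    apply Finset.sum_le_sum
    intro l hl
    have : (l : ℝ) ≤ 1 := by
      have := Finset.mem_range.1 hl
      exact_mod_cast (by omega : l ≤ 1)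
    nlinarith [hP l]
  have hN2' : (2 : ℝ) ≤ N' := by exact_mod_cast (by omega : 2 ≤ N')
  set L := Real.log ((N' : ℝ) ^ 3 / (2 * ε)) with hL
  have hLN : Real.log N' ≤ L := by
    apply Real.log_le_log (by positivity)
    rw [le_div_iff₀ (by positivity)]
    nlinarith [mul_pos (by linarith : (0:ℝ) < N') (sub_pos.2 hεN),
      mul_nonneg (by positivity : (0:ℝ) ≤ N' * N') (sub_nonneg.2 hN2')]
  have hlog2 : 1 / 2 < Real.log N' := by
    have := Real.log_le_log (by norm_num) hN2'
    linarith [Real.log_two_gt_d9]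
  have hLpos : 0 < L := by linarith
  have hMr : (0 : ℝ) < M := by exact_mod_cast hMpos
  set a : ℝ → ℝ := fun s => Real.exp (-(4 * c * s)) with ha
  have haM : 2 * L ≤ a t * M := by
    have e0 : 0 < 4 * c * (1 + Real.exp 1) := by positivity
    rw [one_div, inv_mul_eq_div, lt_div_iff₀ e0] at htb
    have e1 : 4 * c * t ≤ t * (4 * c * (1 + Real.exp 1)) := by
      have : 0 ≤ c * t * Real.exp 1 := by positivity
      linarith
    have e2 : Real.log L + 2 ≤ -(4 * c * t) + Real.log M := by linarith
    have e3 := Real.exp_le_exp.2 e2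
    rw [Real.exp_add, Real.exp_add, Real.exp_log hLpos, Real.exp_log hMr] at e3
    have e4 := Real.add_one_le_exp (2 : ℝ)
    simp only [ha]
    nlinarith
  set f : ℕ → ℝ := fun l => ((min l (M + 1) : ℕ) : ℝ) with hf
  have hf0 : ∀ l, 0 ≤ f l := fun l => Nat.cast_nonneg _
  have hfs : ∀ l ≤ M, f l = l ∧ f (l + 1) = l + 1 := by
    intro l hl
    simp only [hf]
    rw [min_eq_left (by omega), min_eq_left (by omega)]
    simp
  have hfb : ∀ l, M < l → f l = M + 1 := by
    intro l hl
    simp only [hf]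
    rw [min_eq_right (by omega)]
    simp
  have ha0 : ∀ s, 0 < a s := fun s => Real.exp_pos _
  have ha1 : ∀ s, 0 ≤ s → a s ≤ 1 := by
    intro s hs
    apply Real.exp_le_one_iff.2
    have : 0 ≤ 4 * c * s := by positivity
    linarith
  have hlin : ∀ k s : ℝ, HasDerivAt (fun s : ℝ => -(k * s)) (-k) s := fun k s => by
    simpa using ((hasDerivAt_id s).const_mul k).fun_neg
  have hf00 : f 0 = 0 := by
    have := (hfs 0 (by omega)).1
    simpa using this
  have hE1 := aux_mono N' K φ hKtop hODE hinit0 hinit M c hc hK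
      (fun l s => Real.exp (-(2 * c * s)) * (f l + 1 / 2))
      (fun l s => -(2 * c) * (Real.exp (-(2 * c * s)) * (f l + 1 / 2)))
      (fun l s => Real.exp (-(2 * c * s)) * (f l + 1))
      (fun l s => Real.exp (-(2 * c * s)) * f l)
      (fun l s => by
        exact ((hlin (2 * c) s).exp.mul_const (f l + 1 / 2)).congr_deriv (by ring))
      (fun l s _ => by
        have : f l ≤ f (l + 1) := by
          simp only [hf]
          exact_mod_cast min_le_min_right _ (Nat.le_succ l)
        gcongr)
      (fun l s _ hl => by rw [hfb l hl, hfb (l + 1) (by omega)])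
      (fun l s _ => by
        have := hf0 l
        positivity)
      (fun l s _ => by
        have := hf0 l
        positivity)
      (fun l s _ hl => by
        rw [(hfs l hl).1, (hfs l hl).2]
        apply le_of_eq
        ring)
      (fun l s _ hl => by
        rw [(hfs l hl).1, (hfs l hl).2]
        apply le_of_eq
        ring)
      (fun l s _ => by
        apply le_of_eq
        ring) t ht
  have hE2 := aux_mono N' K φ hKtop hODE hinit0 hinit M c hc hK
      (fun l s => Real.exp (a s * (f l + 1 / 2)))
      (fun l s => -(4 * c) * a s * (f l + 1 / 2) * Real.exp (a s * (f l + 1 / 2)))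
      (fun l s => 2 * a s * (f l + 1) * Real.exp (a s * (f l + 1 / 2)))
      (fun l s => a s * f l * Real.exp (a s * (f l + 1 / 2)))
      (fun l s => by
        exact ((hlin (4 * c) s).exp.mul_const (f l + 1 / 2)).exp.congr_deriv (by
          simp only [ha]
          ring))
      (fun l s _ => by
        have : f l ≤ f (l + 1) := by
          simp only [hf]
          exact_mod_cast min_le_min_right _ (Nat.le_succ l)
        have := ha0 s
        gcongr)
      (fun l s _ hl => by rw [hfb l hl, hfb (l + 1) (by omega)])
      (fun l s _ => by
        have := hf0 l
        have := ha0 s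
        positivity)
      (fun l s _ => by
        have := hf0 l
        have := ha0 s
        positivity)
      (fun l s hs hl => by
        rw [(hfs l hl).1, (hfs l hl).2]
        have e1 : Real.exp (a s * ((l : ℝ) + 1 + 1 / 2))
            = Real.exp (a s) * Real.exp (a s * (l + 1 / 2)) := by
          rw [← Real.exp_add]
          ring_nf
        have e2 : Real.exp (a s) - 1 ≤ 2 * a s := by
          have := Real.abs_exp_sub_one_le (x := a s) (by
            rw [abs_of_pos (ha0 s)]
            exact ha1 s hs)
          rw [abs_of_pos (ha0 s)] at this
          exact (le_abs_self _).trans this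
        rw [e1]
        calc _ = (Real.exp (a s) - 1) * (l + 1) * Real.exp (a s * (l + 1 / 2)) := by ring
          _ ≤ _ := by gcongr)
      (fun l s hs hl => by
        rw [(hfs l hl).1, (hfs l hl).2]
        have e1 : Real.exp (a s * ((l : ℝ) + 1 / 2))
            = Real.exp (- a s) * Real.exp (a s * (l + 1 + 1 / 2)) := by
          rw [← Real.exp_add]
          ring_nf
        have e2 : 1 - Real.exp (- a s) ≤ a s := by
          linarith [Real.add_one_le_exp (- a s)]
        rw [e1]
        calc _ = (1 - Real.exp (- a s)) * (l + 1) * Real.exp (a s * (l + 1 + 1 / 2)) := by ring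
          _ ≤ _ := by gcongr)
      (fun l s _ => by
        have h1 := hf0 l
        have h2 := ha0 s
        have : 0 ≤ c * a s * f l * Real.exp (a s * (f l + 1 / 2)) := by positivity
        linarith) t ht
  -- combine
  have hS1 : ∑ l ∈ Finset.range (N' + 1), f l * φ l t ^ 2 + 1 / 2
      ≤ Real.exp (2 * c * t) / 2 := by
    have e1 : ∑ l ∈ Finset.range (N' + 1), Real.exp (-(2 * c * t)) * (f l + 1 / 2) * φ l t ^ 2
        = Real.exp (-(2 * c * t)) * (∑ l ∈ Finset.range (N' + 1), f l * φ l t ^ 2 + 1 / 2) := by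
      have e0 : (1 / 2 : ℝ) = ∑ l ∈ Finset.range (N' + 1), 1 / 2 * φ l t ^ 2 := by
        rw [← Finset.mul_sum, hn, mul_one]
      conv_rhs => rw [e0, ← Finset.sum_add_distrib, Finset.mul_sum]
      exact Finset.sum_congr rfl fun l _ => by ring
    rw [e1] at hE1
    have e2 : f 0 = 0 := hf00
    rw [e2, Real.exp_neg] at hE1
    have e3 := Real.exp_pos (2 * c * t)
    rw [inv_mul_le_iff₀ e3] at hE1
    simp at hE1
    linarith
  have hS2 : N' * ∑ l ∈ Finset.range (N' + 1), (if M < l then (1:ℝ) else 0) * φ l t ^ 2 ≤ 1 := by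
    have e1 : N' * ∑ l ∈ Finset.range (N' + 1), (if M < l then (1:ℝ) else 0) * φ l t ^ 2
        ≤ Real.exp (- (1 / 2)) *
          ∑ l ∈ Finset.range (N' + 1), Real.exp (a t * (f l + 1 / 2)) * φ l t ^ 2 := by
      rw [Finset.mul_sum, Finset.mul_sum]
      apply Finset.sum_le_sum
      intro l _
      by_cases h : M < l
      · simp only [h, if_true, one_mul]
        rw [← mul_assoc, ← Real.exp_add]
        apply mul_le_mul_of_nonneg_right _ (hP l)
        rw [← Real.log_le_iff_le_exp (by linarith), hfb l h]
        have := ha0 t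
        nlinarith
      · simp only [h, if_false, zero_mul, mul_zero]
        positivity
    refine e1.trans ?_
    have e2 : f 0 = 0 := hf00
    have e3 : a 0 = 1 := by simp [ha]
    rw [e2, e3] at hE2
    calc _ ≤ Real.exp (-(1 / 2)) * Real.exp (1 * (0 + 1 / 2)) :=
          mul_le_mul_of_nonneg_left hE2 (Real.exp_pos _).le
      _ = 1 := by
        rw [← Real.exp_add]
        norm_num
  have hS3 : ∑ l ∈ Finset.range (N' + 1), (l : ℝ) * φ l t ^ 2
      ≤ ∑ l ∈ Finset.range (N' + 1), f l * φ l t ^ 2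
        + N' * ∑ l ∈ Finset.range (N' + 1), (if M < l then (1:ℝ) else 0) * φ l t ^ 2 := by
    rw [Finset.mul_sum, ← Finset.sum_add_distrib]
    apply Finset.sum_le_sum
    intro l hl
    by_cases h : M < l
    · have : (l : ℝ) ≤ N' := by
        have := Finset.mem_range.1 hl
        exact_mod_cast (by omega : l ≤ N')
      simp only [h, if_true, one_mul]
      have := hf0 l
      nlinarith [hP l, mul_nonneg (hf0 l) (hP l)]
    · rw [(hfs l (by omega)).1]
      simp [h]
  have h7 : Real.exp (2 * c * t) ≤ Real.exp (2 * c * (1 + ε) * t) := by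
    apply Real.exp_le_exp.2
    have : 0 ≤ c * ε * t := by positivity
    linarith
  linarith
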